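/- There is no Condorcet domain D on a 9-element set with |D| = 3 that is (3,3)-abundant, and there is no Condorcet domain D on a 9-element set with |D| = 4 that is (3,4)-abundant. Equivalently, for any three (respectively four) linear orders on 9 alternatives forming a Condorcet domain, there exists a 3-element subset on which at least two of the orders induce the same linear order. -/

import Mathlib

/-- `r` is a strict total order on `X`, supported on `X` (i.e. `r` never relates
elements outside `X`). -/
def IsLinearOrderOn {α : Type*} (X : Set α) (r : α → α → Prop) : Prop :=
  (∀ a b, r a b → a ∈ X ∧ b ∈ X) ∧
  (∀ a ∈ X, ¬ r a a) ∧
  (∀ a ∈ X, ∀ b ∈ X, ∀ c ∈ X, r a b → r b c → r a c) ∧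
  (∀ a ∈ X, ∀ b ∈ X, a ≠ b → r a b ∨ r b a)

/-- A domain on `X` is a set of linear orders on `X`. -/
def IsDomainOn {α : Type*} (X : Set α) (D : Set (α → α → Prop)) : Prop :=
  ∀ r ∈ D, IsLinearOrderOn X r

/-- The restriction of the order `r` to the subset `A`. -/
def restrictRel {α : Type*} (A : Set α) (r : α → α → Prop) : α → α → Prop :=
  fun a b => a ∈ A ∧ b ∈ A ∧ r a b

/-- The restriction of the domain `D` to the subset `A`: the set of linear orders
on `A` induced by the orders in `D`. -/
def restrictDom {α : Type*} (A : Set α) (D : Set (α → α → Prop)) :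
    Set (α → α → Prop) :=
  restrictRel A '' D

/-- `D` is `(k,s)`-abundant on `X`: its restriction to every `k`-element subset of `X`
contains at least `s` distinct linear orders. -/
def IsAbundant {α : Type*} (X : Set α) (D : Set (α → α → Prop)) (k s : ℕ) : Prop :=
  ∀ A : Set α, A ⊆ X → A.ncard = k → s ≤ (restrictDom A D).ncard

/-- `D` is exactly `(k,s)`-abundant: `(k,s)`-abundant but not `(k,s+1)`-abundant. -/
def IsExactlyAbundant {α : Type*} (X : Set α) (D : Set (α → α → Prop)) (k s : ℕ) : Prop :=
  IsAbundant X D k s ∧ ¬ IsAbundant X D k (s + 1)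

/-- The number of orders in the profile `R` that rank `a` above `b`. -/
noncomputable def majCount {α : Type*} (R : List (α → α → Prop)) (a b : α) : ℕ :=
  Nat.card {i : Fin R.length // (R.get i) a b}

/-- More than half of the orders in the profile `R` rank `a` above `b`. -/
def MajPrefers {α : Type*} (R : List (α → α → Prop)) (a b : α) : Prop :=
  R.length < 2 * majCount R a b

/-- `D` is a Condorcet domain on `X`: it is a domain on `X` and for every profile
(list of orders from `D`) of odd length, the majority relation is transitive on `X`. -/
def IsCondorcetDomain {α : Type*} (X : Set α) (D : Set (α → α → Prop)) : Prop :=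
  IsDomainOn X D ∧
  ∀ R : List (α → α → Prop), (∀ r ∈ R, r ∈ D) → Odd R.length →
    ∀ a ∈ X, ∀ b ∈ X, ∀ c ∈ X,
      MajPrefers R a b → MajPrefers R b c → MajPrefers R a c

/-- A maximal Condorcet domain on `X`. -/
def IsMaximalCondorcetDomain {α : Type*} (X : Set α) (D : Set (α → α → Prop)) : Prop :=
  IsCondorcetDomain X D ∧
  ∀ D' : Set (α → α → Prop), D ⊆ D' → IsCondorcetDomain X D' → D' = D

/-!
If a domain `D` is `(3, |D|)`-abundant, restriction to a triple is injective
on `D`, so two distinct orders of `D` never share a chain `a, b, c`; their intersection is a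
relation without directed paths of length two. Of three orders, two agree on each pair of
alternatives, so the three pairwise intersections cover all pairs. Color each alternative by the set
of intersections in which it has a predecessor: distinct alternatives get distinct colors, hence
there are at most `2 ^ 3 = 8` of them.
-/

section NoTwoPaths

variable {α ι : Type*} {X : Set α} {q : ι → α → α → Prop}

theorem injOn_setOf_exists_pred (hpath : ∀ i a b c, q i a b → ¬ q i b c)
    (hcover : X.Pairwise fun a b => ∃ i, q i a b ∨ q i b a) :
    X.InjOn fun b => {i | ∃ a, q i a b} := by
  have ne_of_rel {i : ι} {a b : α} (hab : q i a b) :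
      {i | ∃ c, q i c a} ≠ {i | ∃ c, q i c b} := by
    intro heq
    have hmem : i ∈ {i | ∃ c, q i c a} := heq ▸ ⟨a, hab⟩
    obtain ⟨c, hca⟩ := hmem
    exact hpath i c a b hca hab
  intro a ha b hb heq
  by_contra hne
  obtain ⟨i, hab | hba⟩ := hcover ha hb hne
  · exact ne_of_rel hab heq
  · exact ne_of_rel hba heq.symm

theorem encard_le_card_set_of_no_two_paths (hpath : ∀ i a b c, q i a b → ¬ q i b c)
    (hcover : X.Pairwise fun a b => ∃ i, q i a b ∨ q i b a) :
    X.encard ≤ ENat.card (Set ι) := by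
  rw [← (injOn_setOf_exists_pred hpath hcover).encard_image]
  exact Set.encard_le_card

end NoTwoPaths

section LinearOrders

variable {α : Type*} {X : Set α} {r s t : α → α → Prop} {a b c : α}

namespace IsLinearOrderOn

theorem irrefl (hr : IsLinearOrderOn X r) (a : α) : ¬ r a a := fun haa =>
  hr.2.1 a (hr.1 a a haa).1 haa

theorem trans (hr : IsLinearOrderOn X r) (hab : r a b) (hbc : r b c) : r a c :=
  hr.2.2.1 a (hr.1 a b hab).1 b (hr.1 a b hab).2 c (hr.1 b c hbc).2 hab hbc

theorem asymm (hr : IsLinearOrderOn X r) (hab : r a b) : ¬ r b a := fun hba =>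
  hr.irrefl a (hr.trans hab hba)

theorem ne (hr : IsLinearOrderOn X r) (hab : r a b) : a ≠ b := by
  rintro rfl
  exact hr.irrefl a hab

theorem total (hr : IsLinearOrderOn X r) (ha : a ∈ X) (hb : b ∈ X) (hne : a ≠ b) :
    r a b ∨ r b a :=
  hr.2.2.2 a ha b hb hne

theorem restrictRel_chain_iff (hr : IsLinearOrderOn X r) (hab : r a b) (hbc : r b c) {x y : α} :
    restrictRel {a, b, c} r x y ↔ x = a ∧ y = b ∨ x = a ∧ y = c ∨ x = b ∧ y = c := by
  have hac := hr.trans hab hbc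
  simp only [restrictRel, Set.mem_insert_iff, Set.mem_singleton_iff]
  constructor
  · rintro ⟨rfl | rfl | rfl, rfl | rfl | rfl, hxy⟩ <;>
      simp_all [hr.irrefl, hr.asymm hab, hr.asymm hbc, hr.asymm hac]
  · rintro (⟨rfl, rfl⟩ | ⟨rfl, rfl⟩ | ⟨rfl, rfl⟩) <;> simp [hab, hbc, hac]

theorem restrictRel_eq_of_common_chain (hr : IsLinearOrderOn X r) (hs : IsLinearOrderOn X s)
    (hrab : r a b) (hrbc : r b c) (hsab : s a b) (hsbc : s b c) :
    restrictRel {a, b, c} r = restrictRel {a, b, c} s := by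
  ext x y
  rw [hr.restrictRel_chain_iff hrab hrbc, hs.restrictRel_chain_iff hsab hsbc]

theorem exists_two_agree (hr : IsLinearOrderOn X r) (hs : IsLinearOrderOn X s)
    (ht : IsLinearOrderOn X t) (ha : a ∈ X) (hb : b ∈ X) (hne : a ≠ b) :
    ∃ i, ![r ⊓ s, r ⊓ t, s ⊓ t] i a b ∨ ![r ⊓ s, r ⊓ t, s ⊓ t] i b a := by
  have hr_total := hr.total ha hb hne
  have hs_total := hs.total ha hb hne
  have ht_total := ht.total ha hb hne
  simp only [Fin.exists_fin_succ, Matrix.cons_val_zero, Matrix.cons_val_succ, Pi.inf_apply,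
    inf_Prop_eq, IsEmpty.exists_iff]
  tauto

theorem encard_le_eight_of_no_common_chain (hr : IsLinearOrderOn X r) (hs : IsLinearOrderOn X s)
    (ht : IsLinearOrderOn X t)
    (hrs : ∀ a b c, (r ⊓ s) a b → ¬ (r ⊓ s) b c)
    (hrt : ∀ a b c, (r ⊓ t) a b → ¬ (r ⊓ t) b c)
    (hst : ∀ a b c, (s ⊓ t) a b → ¬ (s ⊓ t) b c) :
    X.encard ≤ 8 := by
  have hpath : ∀ i a b c, ![r ⊓ s, r ⊓ t, s ⊓ t] i a b → ¬ ![r ⊓ s, r ⊓ t, s ⊓ t] i b c :=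
    Fin.forall_fin_succ.2 ⟨hrs, Fin.forall_fin_two.2 ⟨hrt, hst⟩⟩
  calc
    X.encard ≤ ENat.card (Set (Fin 3)) :=
      encard_le_card_set_of_no_two_paths hpath fun _ ha _ hb => hr.exists_two_agree hs ht ha hb
    _ = 8 := by simp

end IsLinearOrderOn

end LinearOrders

namespace IsAbundant

variable {α : Type*} {X : Set α} {D : Set (α → α → Prop)} {k : ℕ}

theorem injOn_restrictRel (hab : IsAbundant X D k D.ncard) (hfin : D.Finite) {A : Set α}
    (hA : A ⊆ X) (hcard : A.ncard = k) : D.InjOn (restrictRel A) :=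
  (Set.ncard_image_iff hfin).1 ((Set.ncard_image_le hfin).antisymm (hab A hA hcard))

theorem not_common_chain (hab : IsAbundant X D 3 D.ncard) (hfin : D.Finite)
    (hD : IsDomainOn X D) {r s : α → α → Prop} (hr : r ∈ D) (hs : s ∈ D) (hne : r ≠ s)
    (a b c : α) : (r ⊓ s) a b → ¬ (r ⊓ s) b c := by
  rintro ⟨hrab, hsab⟩ ⟨hrbc, hsbc⟩
  have hlin := hD r hr
  have hsub : {a, b, c} ⊆ X := by
    simp only [Set.insert_subset_iff, Set.singleton_subset_iff]
    exact ⟨(hlin.1 a b hrab).1, hlin.1 b c hrbc⟩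
  have hcard : ({a, b, c} : Set α).ncard = 3 :=
    Set.ncard_eq_three.2
      ⟨a, b, c, hlin.ne hrab, hlin.ne (hlin.trans hrab hrbc), hlin.ne hrbc, rfl⟩
  exact hne (hab.injOn_restrictRel hfin hsub hcard hr hs
    (hlin.restrictRel_eq_of_common_chain (hD s hs) hrab hrbc hsab hsbc))

end IsAbundant

theorem no_small_abundant_condorcet_on_nine_general {α : Type*} {X : Set α} (hX : 8 < X.encard)
    {D : Set (α → α → Prop)} (hD : IsDomainOn X D) (hcard : 2 < D.ncard) :
    ¬ IsAbundant X D 3 D.ncard := by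
  intro hab
  have hfin : D.Finite := Set.finite_of_ncard_pos (by omega)
  obtain ⟨r, s, t, hr, hs, ht, hrs, hrt, hst⟩ := (Set.two_lt_ncard_iff hfin).1 hcard
  exact hX.not_ge <| (hD r hr).encard_le_eight_of_no_common_chain (hD s hs) (hD t ht)
    (hab.not_common_chain hfin hD hr hs hrs)
    (hab.not_common_chain hfin hD hr ht hrt)
    (hab.not_common_chain hfin hD hs ht hst)

/-- On a 9-element set, no Condorcet domain of size 3 is `(3,3)`-abundant and no
Condorcet domain of size 4 is `(3,4)`-abundant. -/
theorem no_small_abundant_condorcet_on_nine {α : Type*} (X : Set α)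
    (hX : X.Finite) (hXcard : X.ncard = 9)
    (D : Set (α → α → Prop)) (hD : IsCondorcetDomain X D) :
    (D.ncard = 3 → ¬ IsAbundant X D 3 3) ∧ (D.ncard = 4 → ¬ IsAbundant X D 3 4) := by
  have hX8 : 8 < X.encard := by rw [← hX.cast_ncard_eq, hXcard]; norm_num
  constructor <;> intro h <;>
    exact h ▸ no_small_abundant_condorcet_on_nine_general hX8 hD.1 (by omega)
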